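/- arXiv:2004.10903 — 3 statements merged into one kernel-verified Lean document; each statement's English description precedes it below -/
import Mathlib

section
/- Let n ≥ 2 and let A, B ∈ Mₙ(ℂ) be such that A is normal, the operator norm of B on Euclidean ℂⁿ equals 1, and {(x,y,z) ∈ ℂ³ : det(x·A + y·B + z·AB − I) = 0} = {(x,y,z) ∈ ℂ³ : xⁿ + yⁿ + (−1)^{n−1} zⁿ = 1}. Let P₀ be the orthogonal projection onto ker(A − I). Then P₀BᵏP₀ = 0 for k = 1,…,n−1, and P₀BⁿP₀ = P₀. -/
open Matrix Complex

noncomputable section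

open Polynomial in
lemma aux_charpoly (n : ℕ) (hn : 2 ≤ n) (M : Matrix (Fin n) (Fin n) ℂ)
    (h : ∀ x : ℂ, x ^ n = 1 → (x • (1 : Matrix (Fin n) (Fin n) ℂ) - M).det = 0) :
    M.charpoly = X ^ n - 1 := by
  have hn0 : n ≠ 0 := by omega
  have hprim := Complex.isPrimitiveRoot_exp n hn0
  have hdvd : (X ^ n - 1 : ℂ[X]) ∣ M.charpoly := by
    rw [X_pow_sub_one_eq_prod (by omega) hprim]
    apply Finset.prod_dvd_of_coprime
    · intro a _ b _ hab
      exact pairwise_coprime_X_sub_C (s := fun x : ℂ => x) Function.injective_id hab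
    · intro x hx
      rw [dvd_iff_isRoot, IsRoot.def, Matrix.eval_charpoly]
      have := h x ((Polynomial.mem_nthRootsFinset (by omega) _).1 hx)
      rw [← this, Matrix.smul_one_eq_diagonal]
      rfl
  have hm : (X ^ n - 1 : ℂ[X]).Monic := by
    simpa using monic_X_pow_sub_C (1 : ℂ) hn0
  have hd : (X ^ n - 1 : ℂ[X]).natDegree = n := by
    simpa using natDegree_X_pow_sub_C (n := n) (r := (1 : ℂ))
  refine (eq_of_monic_of_dvd_of_natDegree_le hm M.charpoly_monic hdvd ?_).symm ▸ rfl
  rw [hd, Matrix.charpoly_natDegree_eq_dim]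
  simp

lemma aux_pow (n : ℕ) (M : Matrix (Fin n) (Fin n) ℂ)
    (h : M.charpoly = Polynomial.X ^ n - 1) : M ^ n = 1 := by
  have := M.aeval_self_charpoly
  rw [h] at this
  simpa [sub_eq_zero] using this

open Polynomial in
lemma aux_adj (n : ℕ) (hn : 2 ≤ n) (M : Matrix (Fin n) (Fin n) ℂ)
    (h : M.charpoly = Polynomial.X ^ n - 1) (z : ℂ) :
    (1 - z • M).adjugate = ∑ k ∈ Finset.range n, (z • M) ^ k := by
  have hM := aux_pow n M h
  have hdet : ∀ w : ℂ, w ≠ 0 → (1 - w • M).det = 1 - w ^ n := by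
    intro w hw
    have h1 : (1 - w • M) = w • (Matrix.scalar (Fin n) w⁻¹ - M) := by
      rw [smul_sub]
      congr 1
      ext i j
      by_cases hij : i = j <;> simp [Matrix.one_apply, hij, hw, Matrix.diagonal]
    rw [h1, Matrix.det_smul, ← Matrix.eval_charpoly, h]
    simp
    field_simp
  have key : ∀ w : ℂ, w ≠ 0 → w ^ n ≠ 1 →
      (1 - w • M).adjugate = ∑ k ∈ Finset.range n, (w • M) ^ k := by
    intro w hw hwn
    have e1 : (1 - w • M) * ∑ k ∈ Finset.range n, (w • M) ^ k = (1 - w ^ n) • 1 := by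
      rw [mul_neg_geom_sum, _root_.smul_pow, hM, sub_smul, one_smul]
    have e2 := congrArg (fun T => (1 - w • M).adjugate * T) e1
    simp only [← mul_assoc, Matrix.adjugate_mul, hdet w hw] at e2
    have hne : (1 - w ^ n) ≠ 0 := sub_ne_zero.2 (Ne.symm hwn)
    simp only [Matrix.smul_mul, Matrix.mul_smul, one_mul, mul_one] at e2
    exact (smul_right_injective _ hne e2).symm
  have hfin : {w : ℂ | ¬ (w ≠ 0 ∧ w ^ n ≠ 1)}.Finite := by
    have hp : (X * (X ^ n - 1) : ℂ[X]) ≠ 0 := by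
      refine mul_ne_zero X_ne_zero ?_
      simpa using (monic_X_pow_sub_C (1 : ℂ) (by omega : n ≠ 0)).ne_zero
    refine (Polynomial.finite_setOfPred_isRoot hp).subset ?_
    intro w hw
    simp only [Set.mem_ofPred_eq, not_and_or, not_not] at hw
    rcases hw with hw | hw <;> simp [hw, IsRoot.def]
  have hdense : Dense {w : ℂ | w ≠ 0 ∧ w ^ n ≠ 1} := by
    have := Set.Countable.dense_compl ℂ (Set.Finite.countable hfin)
    convert this using 1
    ext w; simp
  have hc1 : Continuous fun w : ℂ => (1 - w • M).adjugate := by fun_prop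
  have hc2 : Continuous fun w : ℂ => ∑ k ∈ Finset.range n, (w • M) ^ k := by fun_prop
  exact congrFun (Continuous.ext_on hdense hc1 hc2 (fun w hw => key w hw.1 hw.2)) z

open Polynomial in
lemma aux_rank (n : ℕ) (hn : 2 ≤ n) (M S : Matrix (Fin n) (Fin n) ℂ)
    (h : M.charpoly = Polynomial.X ^ n - 1) (hS : M * S = S) :
    ∃ v u : Fin n → ℂ, S = vecMulVec v u := by
  have hroot : M.charpoly.rootMultiplicity 1 ≤ 1 := by
    rw [h]
    refine Polynomial.rootMultiplicity_le_one_of_separable ?_ 1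
    have := Polynomial.separable_X_pow_sub_C (F := ℂ) (1 : ℂ) (n := n)
      (by exact_mod_cast (by omega : n ≠ 0)) one_ne_zero
    simpa using this
  have hfr : Module.finrank ℂ (Module.End.eigenspace (Matrix.toLin' M) 1) ≤ 1 := by
    refine le_trans (Submodule.finrank_mono
      (Module.End.genEigenspace_le_maximal (Matrix.toLin' M) 1 1)) ?_
    rw [LinearMap.finrank_maxGenEigenspace_eq, Matrix.charpoly_toLin']
    exact hroot
  obtain ⟨v, hv⟩ := finrank_le_one_iff.1 hfr
  have hcol : ∀ j, ∃ c : ℂ, c • (v : Fin n → ℂ) = fun i => S i j := by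
    intro j
    have hmem : (fun i => S i j) ∈ Module.End.eigenspace (Matrix.toLin' M) 1 := by
      rw [Module.End.mem_eigenspace_iff, one_smul, Matrix.toLin'_apply]
      ext i
      conv_rhs => rw [← hS]
      rfl
    obtain ⟨c, hc⟩ := hv ⟨_, hmem⟩
    exact ⟨c, congrArg Subtype.val hc⟩
  choose u hu using hcol
  refine ⟨v, u, ?_⟩
  ext i j
  have := congrFun (hu j) i
  simp only [Pi.smul_apply, smul_eq_mul] at this
  rw [vecMulVec_apply, ← this, mul_comm]

lemma aux_sandwich (n : ℕ) (hn : 2 ≤ n) (M S : Matrix (Fin n) (Fin n) ℂ)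
    (h : M.charpoly = Polynomial.X ^ n - 1) (hS : M * S = S) (X : Matrix (Fin n) (Fin n) ℂ) :
    S * X * S = (X * S).trace • S := by
  obtain ⟨v, u, rfl⟩ := aux_rank n hn M S h hS
  rw [mul_assoc, mul_vecMulVec, vecMulVec_mul_vecMulVec, trace_vecMulVec, dotProduct_comm]
  ext i j
  simp [vecMulVec_apply]
  ring

lemma aux_geom_left (n : ℕ) (M : Matrix (Fin n) (Fin n) ℂ) (h : M ^ n = 1) :
    M * ∑ k ∈ Finset.range n, M ^ k = ∑ k ∈ Finset.range n, M ^ k := by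
  have := mul_neg_geom_sum M n
  rw [h, sub_self, sub_mul, one_mul, sub_eq_zero] at this
  exact this.symm

lemma aux_geom_right (n : ℕ) (M : Matrix (Fin n) (Fin n) ℂ) (h : M ^ n = 1) :
    (∑ k ∈ Finset.range n, M ^ k) * M = ∑ k ∈ Finset.range n, M ^ k := by
  have := geom_sum_mul_neg M n
  rw [h, sub_self, mul_sub, mul_one, sub_eq_zero] at this
  exact this.symm

lemma aux_geom_fix (n : ℕ) (M T : Matrix (Fin n) (Fin n) ℂ) (h : M * T = T) :
    (∑ k ∈ Finset.range n, M ^ k) * T = (n : ℂ) • T := by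
  have : ∀ k, M ^ k * T = T := by
    intro k
    induction k with
    | zero => simp
    | succ k ih => rw [pow_succ, mul_assoc, h, ih]
  rw [Finset.sum_mul, Finset.sum_congr rfl (fun k _ => this k)]
  simp [← Nat.cast_smul_eq_nsmul ℂ]

lemma aux_trace (n : ℕ) (hn : 2 ≤ n) (M : Matrix (Fin n) (Fin n) ℂ)
    (h : M.charpoly = Polynomial.X ^ n - 1) :
    (∑ k ∈ Finset.range n, M ^ k).trace = n := by
  have hM := aux_pow n M h
  have hl := aux_geom_left n M hM
  set S := ∑ k ∈ Finset.range n, M ^ k with hSdef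
  have h1 : S * S = (n : ℂ) • S := aux_geom_fix n M S hl
  have h2 := aux_sandwich n hn M S h hl 1
  rw [mul_one, one_mul, h1] at h2
  have hS : S ≠ 0 := by
    intro h0
    have hdet : (1 - M).det = 0 := by
      have := M.eval_charpoly 1
      rw [h] at this
      simpa using this.symm
    obtain ⟨v, hv0, hv⟩ := Matrix.exists_mulVec_eq_zero_iff.2 hdet
    have hMv : M *ᵥ v = v := by
      rw [Matrix.sub_mulVec, Matrix.one_mulVec, sub_eq_zero] at hv
      exact hv.symm
    have hMT : M * vecMulVec v v = vecMulVec v v := by rw [mul_vecMulVec, hMv]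
    have := aux_geom_fix n M _ hMT
    rw [← hSdef, h0, zero_mul] at this
    have hn' : (n : ℂ) ≠ 0 := by exact_mod_cast (by omega : n ≠ 0)
    have h3 := (smul_eq_zero.1 this.symm).resolve_left hn'
    apply hv0
    ext i
    have := congrFun (congrFun h3 i) i
    simpa [vecMulVec_apply] using this
  exact (smul_left_injective ℂ hS h2).symm

open scoped ComplexOrder in
lemma aux_star (n : ℕ) (M : Matrix (Fin n) (Fin n) ℂ) (h : Mᴴ * M = 0) : M = 0 :=
  conjTranspose_mul_self_eq_zero.1 h

theorem stmt_13 (n : ℕ) (hn : 2 ≤ n)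
    (A B : Matrix (Fin n) (Fin n) ℂ)
    (hA : A * Aᴴ = Aᴴ * A)
    (hB : ‖Matrix.toEuclideanCLM (𝕜 := ℂ) B‖ = 1)
    (hspec : {p : ℂ × ℂ × ℂ |
        (p.1 • A + p.2.1 • B + p.2.2 • (A * B) - 1).det = 0} =
      {p : ℂ × ℂ × ℂ |
        p.1 ^ n + p.2.1 ^ n + (-1 : ℂ) ^ (n - 1) * p.2.2 ^ n = 1})
    -- `P₀` is the orthogonal projection onto `ker (A - 1)`
    (P₀ : Matrix (Fin n) (Fin n) ℂ)
    (hP₀herm : P₀ᴴ = P₀) (hP₀idem : P₀ * P₀ = P₀)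
    (hP₀range : (A - 1) * P₀ = 0)
    (hP₀ker : ∀ v : Fin n → ℂ, (A - 1).mulVec v = 0 → P₀.mulVec v = v) :
    (∀ k : ℕ, 1 ≤ k → k ≤ n - 1 → P₀ * B ^ k * P₀ = 0) ∧
    P₀ * B ^ n * P₀ = P₀ := by
  have hn0 : n ≠ 0 := by omega
  have hnC : (n : ℂ) ≠ 0 := by exact_mod_cast hn0
  have hz : ∀ x y z : ℂ, x ^ n + y ^ n + (-1 : ℂ) ^ (n - 1) * z ^ n = 1 →
      (x • A + y • B + z • (A * B) - 1).det = 0 := by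
    intro x y z h
    have : (x, y, z) ∈ {p : ℂ × ℂ × ℂ |
        p.1 ^ n + p.2.1 ^ n + (-1 : ℂ) ^ (n - 1) * p.2.2 ^ n = 1} := h
    rw [← hspec] at this
    exact this
  have hinv : ∀ (M : Matrix (Fin n) (Fin n) ℂ) (x : ℂ), x ≠ 0 → (x⁻¹ • M - 1).det = 0 →
      (x • (1 : Matrix (Fin n) (Fin n) ℂ) - M).det = 0 := by
    intro M x hx h
    have : x • (1 : Matrix (Fin n) (Fin n) ℂ) - M = (-x) • (x⁻¹ • M - 1) := by
      rw [smul_sub, smul_smul]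
      simp [hx]
      abel
    rw [this, det_smul, h, mul_zero]
  have hne : ∀ x : ℂ, x ^ n = 1 → x ≠ 0 := by
    rintro x hx rfl
    simp [hn0] at hx
  have hcA : A.charpoly = Polynomial.X ^ n - 1 := by
    refine aux_charpoly n hn A fun x hx => hinv A x (hne x hx) ?_
    simpa using hz x⁻¹ 0 0 (by simp [hx, hn0])
  have hcB : B.charpoly = Polynomial.X ^ n - 1 := by
    refine aux_charpoly n hn B fun x hx => hinv B x (hne x hx) ?_
    simpa using hz 0 x⁻¹ 0 (by simp [hx, hn0])
  have hAn := aux_pow n A hcA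
  have hBn := aux_pow n B hcB
  obtain ⟨A', hA'A, hAA'⟩ : ∃ A' : Matrix (Fin n) (Fin n) ℂ, A' * A = 1 ∧ A * A' = 1 := by
    refine ⟨A ^ (n - 1), ?_, ?_⟩
    · rw [← pow_succ, Nat.sub_add_cancel (by omega), hAn]
    · rw [← pow_succ', Nat.sub_add_cancel (by omega), hAn]
  have hcC : ∀ z : ℂ, (1 - (1 - A') * (1 - z • B)).charpoly = Polynomial.X ^ n - 1 := by
    intro z
    refine aux_charpoly n hn _ fun x hx => ?_
    have h0 := hz x z (-z) (by
      have : (-1 : ℂ) ^ (n - 1) * (-z) ^ n = - z ^ n := by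
        rw [neg_pow z, ← mul_assoc, ← pow_add,
          show n - 1 + n = 2 * (n - 1) + 1 by omega, pow_succ, pow_mul]
        simp
      rw [this, hx]; ring)
    have : x • (1 : Matrix (Fin n) (Fin n) ℂ) - (1 - (1 - A') * (1 - z • B)) =
        A' * (x • A + z • B + (-z) • (A * B) - 1) := by
      simp only [mul_sub, mul_add, sub_mul, Matrix.mul_smul, ← mul_assoc, hA'A, one_mul, mul_one,
        neg_smul, mul_neg]
      abel
    rw [this, det_mul, h0, mul_zero]
  have hcA' : A'.charpoly = Polynomial.X ^ n - 1 := by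
    have := hcC 0
    simpa using this
  have hA'n := aux_pow n A' hcA'
  have hker : ∀ T : Matrix (Fin n) (Fin n) ℂ, A * T = T → P₀ * T = T := by
    intro T hT
    ext i j
    have h1 : (A - 1) *ᵥ (fun i => T i j) = 0 := by
      rw [sub_mulVec, one_mulVec, sub_eq_zero]
      ext i
      exact congrFun (congrFun hT i) j
    exact congrFun (hP₀ker _ h1) i
  have hAP : A * P₀ = P₀ := by
    rwa [sub_mul, one_mul, sub_eq_zero] at hP₀range
  have hA'P : A' * P₀ = P₀ := by
    conv_lhs => rw [← hAP, ← mul_assoc, hA'A, one_mul]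
  have hSP : ∑ k ∈ Finset.range n, A' ^ k = (n : ℂ) • P₀ := by
    have hl := aux_geom_left n A' hA'n
    have hr := aux_geom_right n A' hA'n
    have hf := aux_geom_fix n A' P₀ hA'P
    set S := ∑ k ∈ Finset.range n, A' ^ k
    have hrA : S * A = S := by
      conv_lhs => rw [← hr, mul_assoc, hA'A, mul_one]
    have h1 : Aᴴ * Sᴴ = Sᴴ := by rw [← conjTranspose_mul, hrA]
    have h2 : (A - 1)ᴴ * Sᴴ = 0 := by
      rw [conjTranspose_sub, conjTranspose_one, sub_mul, h1, one_mul, sub_self]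
    have hN : (A - 1)ᴴ * (A - 1) = (A - 1) * (A - 1)ᴴ := by
      simp only [conjTranspose_sub, conjTranspose_one, sub_mul, mul_sub, one_mul, mul_one, hA]
      abel
    have h3 : (A - 1) * Sᴴ = 0 := by
      apply aux_star
      rw [conjTranspose_mul, mul_assoc,
        ← mul_assoc (A - 1)ᴴ, hN, mul_assoc, h2, mul_zero, mul_zero]
    have h4 : P₀ * Sᴴ = Sᴴ := hker _ (by rwa [sub_mul, one_mul, sub_eq_zero] at h3)
    have h5 := congrArg conjTranspose h4
    rw [conjTranspose_mul, conjTranspose_conjTranspose, hP₀herm, hf] at h5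
    exact h5.symm
  have hmain : ∀ z : ℂ, ((∑ k ∈ Finset.range n, (z • B) ^ k) * P₀).trace = 1 := by
    intro z
    have h1 := aux_trace n hn _ (hcC z)
    have h2 := aux_adj n hn _ (hcC z) 1
    rw [one_smul] at h2
    rw [← h2, sub_sub_cancel, adjugate_mul_distrib, aux_adj n hn B hcB z] at h1
    have h3 := aux_adj n hn A' hcA' 1
    rw [one_smul] at h3
    rw [h3, hSP, Matrix.mul_smul, trace_smul, smul_eq_mul] at h1
    exact mul_left_cancel₀ hnC (by rw [h1, mul_one])
  have htr : ∀ k : ℕ, 1 ≤ k → k ≤ n - 1 → (B ^ k * P₀).trace = 0 := by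
    have hpoly : (∑ k ∈ Finset.range n,
        Polynomial.C ((B ^ k * P₀).trace) * Polynomial.X ^ k : Polynomial ℂ) = 1 := by
      refine Polynomial.funext fun z => ?_
      rw [Polynomial.eval_one, ← hmain z, Finset.sum_mul, trace_sum, Polynomial.eval_finsetSum]
      refine Finset.sum_congr rfl fun k _ => ?_
      rw [smul_pow, Matrix.smul_mul, trace_smul, Polynomial.eval_mul, Polynomial.eval_C,
        Polynomial.eval_pow, Polynomial.eval_X, smul_eq_mul, mul_comm]
    intro k hk1 hk2
    have := congrArg (fun p => Polynomial.coeff p k) hpoly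
    simp only [Polynomial.finsetSum_coeff, Polynomial.coeff_C_mul_X_pow,
      Polynomial.coeff_one] at this
    rw [Finset.sum_ite_eq, if_pos (Finset.mem_range.2 (by omega)), if_neg (by omega)] at this
    exact this
  refine ⟨fun k hk1 hk2 => ?_, by rw [hBn, mul_one, hP₀idem]⟩
  rw [aux_sandwich n hn A P₀ hcA hAP, htr k hk1 hk2, zero_smul]
end
end

section
/- Let n ≥ 2, ω = exp(2πi/n), and let A, B ∈ Mₙ(ℂ) be such that A is normal, the operator norm of B on Euclidean ℂⁿ equals 1, and {(x,y,z₁,z₂) ∈ ℂ⁴ : det(x·A + y·B + z₁·AB + z₂·BA − I) = 0} = {(x,y,z₁,z₂) ∈ ℂ⁴ : xⁿ + yⁿ + (−1)^{n−1}(ω z₁ + z₂)ⁿ = 1}. Let P₀ be the orthogonal projection onto ker(A − I). Then P₀BʳABP₀ = 0 for r = 1,…,n−2, and P₀B^{n−1}ABP₀ = ω·P₀. -/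
open Matrix Complex

noncomputable section

lemma charpoly_aux {n : ℕ} (hn : n ≠ 0) (p : Polynomial ℂ) (hm : p.Monic) (hd : p.natDegree = n)
    (c : ℂ) (h : ∀ t : ℂ, t ≠ 0 → (p.eval t = 0 ↔ t ^ n = c)) :
    p = Polynomial.X ^ n - Polynomial.C c := by
  by_cases hc : c = 0
  · subst hc
    have hs := IsAlgClosed.splits p
    have hr : p.roots = Multiset.replicate n 0 := by
      rw [Multiset.eq_replicate]
      refine ⟨by rw [← hd, hs.natDegree_eq_card_roots], fun t ht => ?_⟩
      by_contra h0
      have := (h t h0).1 (Polynomial.isRoot_of_mem_roots ht)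
      exact h0 (pow_eq_zero_iff hn |>.1 this)
    rw [hs.eq_prod_roots_of_monic hm, hr]
    simp
  · have hq : (Polynomial.X ^ n - Polynomial.C c).Monic := Polynomial.monic_X_pow_sub_C c hn
    symm
    refine (Polynomial.eq_of_monic_of_dvd_of_natDegree_le hq hm ?_ ?_).symm
    · refine (IsAlgClosed.splits _).dvd_of_roots_le_roots hq.ne_zero ?_
      rw [Multiset.le_iff_subset (Polynomial.nodup_roots
        (Polynomial.separable_X_pow_sub_C c (by exact_mod_cast hn) hc))]
      intro t ht
      have h1 : t ^ n = c := by
        have := Polynomial.isRoot_of_mem_roots ht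
        simpa [Polynomial.IsRoot, sub_eq_zero] using this
      have h0 : t ≠ 0 := by
        rintro rfl
        rw [zero_pow hn] at h1
        exact hc h1.symm
      exact (Polynomial.mem_roots hm.ne_zero).2 ((h t h0).2 h1)
    · rw [hd, Polynomial.natDegree_X_pow_sub_C]

lemma trace_aux {n : ℕ} (K X G : Matrix (Fin n) (Fin n) ℂ) (s : ℂ) (hs : s ≠ 0)
    (hGK : G * K = s • 1) (q : Polynomial ℂ) (hq : ∀ a : ℂ, (K - a • X).det = q.eval a)
    (hq0 : q.eval 0 = s) : (G * X).trace = - (Polynomial.derivative q).eval 0 := by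
  have hRK : (s⁻¹ • G) * K = 1 := by
    rw [Matrix.smul_mul, hGK, smul_smul, inv_mul_cancel₀ hs, one_smul]
  have hKR : K * (s⁻¹ • G) = 1 := mul_eq_one_comm.1 hRK
  have hdet : K.det = s := by rw [← hq0, ← hq 0]; simp
  set Z := -((s⁻¹ • G) * X) with hZ
  have key : q = Polynomial.C s * det (1 + (Polynomial.X : Polynomial ℂ) • Z.map Polynomial.C) := by
    apply Polynomial.funext
    intro a
    rw [← hq a]
    have : K - a • X = K * (1 + a • Z) := by
      rw [hZ, mul_add, mul_one, Matrix.mul_smul, mul_neg, ← mul_assoc, hKR, one_mul, smul_neg,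
        sub_eq_add_neg]
    rw [this, det_mul, hdet, Polynomial.eval_mul, Polynomial.eval_C, Matrix.det_one_add_smul,
      congrArg (Polynomial.eval a) (Matrix.det_one_add_X_smul Z)]
    simp
  have h2 := Matrix.derivative_det_one_add_X_smul Z
  rw [key, Polynomial.derivative_C_mul, Polynomial.eval_mul, Polynomial.eval_C, h2, hZ]
  simp only [Matrix.smul_mul, trace_neg, trace_smul, smul_eq_mul]
  field_simp

lemma coeff_aux {n : ℕ} (hn : n ≠ 0) (f : ℕ → ℂ)
    (h : ∀ x : ℂ, x ^ n ≠ 1 → ∑ j ∈ Finset.range n, x ^ j * f j = 0) :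
    ∀ j < n, f j = 0 := by
  set p : Polynomial ℂ := ∑ j ∈ Finset.range n, Polynomial.monomial j (f j) with hp
  have h1 : p = 0 := by
    have : p * (Polynomial.X ^ n - Polynomial.C 1) = 0 := by
      apply Polynomial.funext
      intro x
      by_cases hx : x ^ n = 1
      · simp [hx]
      · have := h x hx
        have h3 : p.eval x = 0 := by
          rw [hp, Polynomial.eval_finsetSum, ← this]
          refine Finset.sum_congr rfl fun j _ => ?_
          rw [Polynomial.eval_monomial, mul_comm]
        rw [Polynomial.eval_mul, h3]; simp
    exact (mul_eq_zero.1 this).resolve_right (Polynomial.monic_X_pow_sub_C 1 hn).ne_zero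
  intro j hj
  have := congrArg (fun q => Polynomial.coeff q j) h1
  simpa [hp, Polynomial.finsetSum_coeff, Polynomial.coeff_monomial, hj] using this

open scoped ComplexOrder in
lemma conj_aux {n : ℕ} (N : Matrix (Fin n) (Fin n) ℂ) (h : Nᴴ * N = 0) : N = 0 :=
  conjTranspose_mul_self_eq_zero.1 h

lemma rank_one_aux {n : ℕ} (P : Matrix (Fin n) (Fin n) ℂ) (hP : P * P = P) (ht : P.trace = 1)
    (Z : Matrix (Fin n) (Fin n) ℂ) : P * Z * P = (P * Z).trace • P := by
  have hid : IsIdempotentElem (Matrix.toLin' P) := by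
    rw [IsIdempotentElem, Module.End.mul_eq_comp, ← Matrix.toLin'_mul, hP]
  have h1 := ((LinearMap.isProj_range_iff_isIdempotentElem _).2 hid).trace
  rw [Matrix.trace_toLin'_eq, ht] at h1
  have h2 : Module.finrank ℂ (LinearMap.range (Matrix.toLin' P)) = 1 := by exact_mod_cast h1.symm
  obtain ⟨v, -, hv⟩ := finrank_eq_one_iff'.1 h2
  have h3 : ∀ j, ∃ c : ℂ, ∀ i, P i j = v.1 i * c := by
    intro j
    obtain ⟨c, hc⟩ := hv ⟨Matrix.toLin' P (Pi.single j 1), LinearMap.mem_range_self _ _⟩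
    refine ⟨c, fun i => ?_⟩
    have := congrFun (congrArg Subtype.val hc) i
    simp at this
    rw [← this, mul_comm]
  choose w hw using h3
  have hPv : P = vecMulVec v.1 w := by
    ext i j
    rw [hw, vecMulVec_apply]
  rw [hPv, Matrix.vecMulVec_mul, Matrix.vecMulVec_mul_vecMulVec, Matrix.trace_vecMulVec]
  ext i j
  simp [vecMulVec_apply, dotProduct_comm]
  try ring

theorem stmt_14 (n : ℕ) (hn : 2 ≤ n)
    (ω : ℂ) (hω : ω = Complex.exp (2 * Real.pi * Complex.I / n))
    (A B : Matrix (Fin n) (Fin n) ℂ)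
    (hA : A * Aᴴ = Aᴴ * A)
    (hB : ‖Matrix.toEuclideanCLM (𝕜 := ℂ) B‖ = 1)
    (hspec : {p : ℂ × ℂ × ℂ × ℂ |
        (p.1 • A + p.2.1 • B + p.2.2.1 • (A * B) + p.2.2.2 • (B * A) - 1).det = 0} =
      {p : ℂ × ℂ × ℂ × ℂ |
        p.1 ^ n + p.2.1 ^ n + (-1 : ℂ) ^ (n - 1) * (ω * p.2.2.1 + p.2.2.2) ^ n = 1})
    -- `P₀` is the orthogonal projection onto `ker (A - 1)`
    (P₀ : Matrix (Fin n) (Fin n) ℂ)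
    (hP₀herm : P₀ᴴ = P₀) (hP₀idem : P₀ * P₀ = P₀)
    (hP₀range : (A - 1) * P₀ = 0)
    (hP₀ker : ∀ v : Fin n → ℂ, (A - 1).mulVec v = 0 → P₀.mulVec v = v) :
    (∀ r : ℕ, 1 ≤ r → r ≤ n - 2 → P₀ * B ^ r * A * B * P₀ = 0) ∧
    P₀ * B ^ (n - 1) * A * B * P₀ = ω • P₀ := by
  have hn0 : n ≠ 0 := by omega
  obtain ⟨m, rfl⟩ : ∃ m, n = m + 1 := ⟨n - 1, by omega⟩
  have hchar : ∀ x y z w : ℂ, (x • A + y • B + z • (A * B) + w • (B * A)).charpoly =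
      Polynomial.X ^ (m + 1) - Polynomial.C
        (x ^ (m + 1) + y ^ (m + 1) + (-1 : ℂ) ^ m * (ω * z + w) ^ (m + 1)) := by
    intro x y z w
    refine charpoly_aux hn0 _ (charpoly_monic _) (by simp) _ fun t ht => ?_
    have h1 := Set.ext_iff.1 hspec (x / t, y / t, z / t, w / t)
    simp only [Set.mem_ofPred_eq, Nat.add_sub_cancel] at h1
    rw [Matrix.eval_charpoly]
    have h2 : Matrix.scalar (Fin (m + 1)) t - (x • A + y • B + z • (A * B) + w • (B * A)) =
        (-t) • ((x / t) • A + (y / t) • B + (z / t) • (A * B) + (w / t) • (B * A) - 1) := by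
      have : Matrix.scalar (Fin (m + 1)) t = t • (1 : Matrix (Fin (m + 1)) (Fin (m + 1)) ℂ) := by
        ext i j; simp [Matrix.one_apply, Matrix.diagonal_apply]
      rw [this]
      simp only [smul_sub, smul_add, smul_smul, neg_mul, mul_div_cancel₀ _ ht, neg_smul]
      abel
    rw [h2, det_smul, mul_eq_zero, or_iff_right (pow_ne_zero _ (neg_ne_zero.2 ht)), h1]
    have h3 : ω * (z / t) + w / t = (ω * z + w) / t := by ring
    have ht' : t ^ (m + 1) ≠ 0 := pow_ne_zero _ ht
    rw [h3, div_pow, div_pow, div_pow, mul_div_assoc', ← add_div, ← add_div, div_eq_one_iff_eq ht',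
      eq_comm]
  have hdet : ∀ x y z w : ℂ, (1 - (x • A + y • B + z • (A * B) + w • (B * A))).det =
      1 - (x ^ (m + 1) + y ^ (m + 1) + (-1 : ℂ) ^ m * (ω * z + w) ^ (m + 1)) := by
    intro x y z w
    have := Matrix.eval_charpoly (x • A + y • B + z • (A * B) + w • (B * A)) 1
    rw [hchar, map_one] at this
    rw [← this]
    simp
  have hpow : ∀ x y z w : ℂ, (x • A + y • B + z • (A * B) + w • (B * A)) ^ (m + 1) =
      (x ^ (m + 1) + y ^ (m + 1) + (-1 : ℂ) ^ m * (ω * z + w) ^ (m + 1)) • 1 := by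
    intro x y z w
    have := Matrix.aeval_self_charpoly (x • A + y • B + z • (A * B) + w • (B * A))
    rw [hchar, map_sub, map_pow, Polynomial.aeval_X, Polynomial.aeval_C, sub_eq_zero] at this
    rw [this, Algebra.algebraMap_eq_smul_one]
  have hAn : A ^ (m + 1) = 1 := by simpa using hpow 1 0 0 0
  have hBn : B ^ (m + 1) = 1 := by simpa using hpow 0 1 0 0
  have hG : ∀ (C : Matrix (Fin (m + 1)) (Fin (m + 1)) ℂ) (x : ℂ), C ^ (m + 1) = 1 →
      (∑ j ∈ Finset.range (m + 1), x ^ j • C ^ j) * (1 - x • C) = (1 - x ^ (m + 1)) • 1 := by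
    intro C x hC
    have := geom_sum_mul_neg (x • C) (m + 1)
    simp only [smul_pow, hC] at this
    rw [this, sub_smul, one_smul]
  -- first-order perturbation in the direction `A * B`
  have key : ∀ x b : ℂ, x ^ (m + 1) ≠ 1 → b ^ (m + 1) ≠ 1 →
      ((∑ j ∈ Finset.range (m + 1), x ^ j • A ^ j) * (∑ k ∈ Finset.range (m + 1), b ^ k • B ^ k) *
        (A * B)).trace = (m + 1) * ω * (b * x) ^ m := by
    intro x b hx hb
    have hq := trace_aux ((1 - b • B) * (1 - x • A)) (A * B)
      ((∑ j ∈ Finset.range (m + 1), x ^ j • A ^ j) * (∑ k ∈ Finset.range (m + 1), b ^ k • B ^ k))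
      ((1 - x ^ (m + 1)) * (1 - b ^ (m + 1)))
      (mul_ne_zero (sub_ne_zero.2 hx.symm) (sub_ne_zero.2 hb.symm)) ?_
      (Polynomial.C (1 - x ^ (m + 1) - b ^ (m + 1)) - Polynomial.C ((-1 : ℂ) ^ m) *
        (Polynomial.C ω * Polynomial.X + Polynomial.C (-(b * x))) ^ (m + 1)) ?_ ?_
    · rw [hq]
      have h1 : (-1 : ℂ) ^ m * (-(b * x)) ^ m = (b * x) ^ m := by
        rw [← mul_pow]; simp
      rw [← h1]
      simp [Polynomial.derivative_pow]
      ring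
    · rw [mul_assoc, ← mul_assoc _ (1 - b • B), hG B b hBn, Matrix.smul_mul, one_mul,
        Matrix.mul_smul, hG A x hAn, smul_smul, mul_comm]
    · intro a
      have h1 : (1 - b • B) * (1 - x • A) - a • (A * B) =
          1 - (x • A + b • B + a • (A * B) + (-(b * x)) • (B * A)) := by
        simp only [mul_sub, sub_mul, one_mul, mul_one, Matrix.smul_mul, Matrix.mul_smul, smul_smul,
          neg_smul]
        rw [mul_comm x b]
        abel
      rw [h1, hdet]
      simp
      ring
    · have h1 : (-1 : ℂ) ^ m * (-(b * x)) ^ (m + 1) = -((b * x) ^ (m + 1)) := by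
        rw [pow_succ (-(b * x)), ← mul_assoc, ← mul_pow, pow_succ (b * x)]; simp
      simp only [Polynomial.eval_sub, Polynomial.eval_mul, Polynomial.eval_C, Polynomial.eval_pow,
        Polynomial.eval_add, Polynomial.eval_X, mul_zero, zero_add, h1]
      ring
  have keyA : ∀ x : ℂ, x ^ (m + 1) ≠ 1 →
      ((∑ j ∈ Finset.range (m + 1), x ^ j • A ^ j) * A).trace = (m + 1) * x ^ m := by
    intro x hx
    have hq := trace_aux (1 - x • A) A (∑ j ∈ Finset.range (m + 1), x ^ j • A ^ j)
      (1 - x ^ (m + 1)) (sub_ne_zero.2 hx.symm) (hG A x hAn)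
      (1 - (Polynomial.X + Polynomial.C x) ^ (m + 1)) ?_ ?_
    · rw [hq]
      simp [Polynomial.derivative_pow]
    · intro a
      have h1 : 1 - x • A - a • A =
          1 - ((a + x) • A + (0 : ℂ) • B + (0 : ℂ) • (A * B) + (0 : ℂ) • (B * A)) := by
        simp only [zero_smul, add_zero, add_smul]
        abel
      rw [h1, hdet]
      simp
    · simp
  -- the traces
  have tr1 : ∀ j < m + 1, ∀ k < m + 1, (A ^ j * B ^ k * (A * B)).trace =
      if j = m then (if k = m then (m + 1) * ω else 0) else 0 := by
    have h1 : ∀ j < m + 1, ∀ b : ℂ, b ^ (m + 1) ≠ 1 →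
        (A ^ j * (∑ k ∈ Finset.range (m + 1), b ^ k • B ^ k) * (A * B)).trace -
          (if j = m then (m + 1) * ω * b ^ m else 0) = 0 := by
      intro j hj b hb
      refine coeff_aux hn0 (fun j => (A ^ j * (∑ k ∈ Finset.range (m + 1), b ^ k • B ^ k) *
        (A * B)).trace - (if j = m then (m + 1) * ω * b ^ m else 0)) (fun x hx => ?_) j hj
      have h2 := key x b hx hb
      rw [Finset.sum_mul, Finset.sum_mul, trace_sum] at h2
      simp only [Matrix.smul_mul, trace_smul, smul_eq_mul] at h2
      simp only [mul_sub, Finset.sum_sub_distrib, h2]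
      simp
      ring
    intro j hj k hk
    rw [← sub_eq_zero]
    refine coeff_aux hn0 (fun k => (A ^ j * B ^ k * (A * B)).trace -
      (if j = m then (if k = m then (m + 1) * ω else 0) else 0)) (fun b hb => ?_) k hk
    have h2 := h1 j hj b hb
    rw [Finset.mul_sum, Finset.sum_mul, trace_sum] at h2
    simp only [Matrix.smul_mul, Matrix.mul_smul, trace_smul, smul_eq_mul] at h2
    rw [sub_eq_zero] at h2
    simp only [mul_sub, Finset.sum_sub_distrib, h2]
    split_ifs
    · simp
      ring
    · simp
  have tr2 : ∀ j < m + 1, (A ^ j * A).trace = if j = m then ((m : ℂ) + 1) else 0 := by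
    intro j hj
    rw [← sub_eq_zero]
    refine coeff_aux hn0 (fun j => (A ^ j * A).trace - if j = m then ((m : ℂ) + 1) else 0)
      (fun x hx => ?_) j hj
    have h2 := keyA x hx
    rw [Finset.sum_mul, trace_sum] at h2
    simp only [Matrix.smul_mul, trace_smul, smul_eq_mul] at h2
    simp only [mul_sub, Finset.sum_sub_distrib, h2]
    simp
    ring
  -- the projection is the average of the powers of `A`
  have hm0 : ((m : ℂ) + 1) ≠ 0 := by exact_mod_cast hn0
  have hAP : A * P₀ = P₀ := by
    rw [sub_mul, one_mul, sub_eq_zero] at hP₀range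
    exact hP₀range
  have hPA : P₀ * A = P₀ := by
    have h1 : (A - 1) * (A - 1)ᴴ = (A - 1)ᴴ * (A - 1) := by
      simp only [conjTranspose_sub, conjTranspose_one, mul_sub, sub_mul, one_mul, mul_one, hA]
      abel
    have h2 : ((A - 1)ᴴ * P₀)ᴴ * ((A - 1)ᴴ * P₀) = 0 := by
      rw [conjTranspose_mul, conjTranspose_conjTranspose, mul_assoc, ← mul_assoc (A - 1), h1,
        mul_assoc, hP₀range, mul_zero, mul_zero]
    have h3 := congrArg conjTranspose (conj_aux _ h2)
    rw [conjTranspose_mul, conjTranspose_conjTranspose, hP₀herm, conjTranspose_zero, mul_sub,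
      mul_one, sub_eq_zero] at h3
    exact h3
  set S := ∑ j ∈ Finset.range (m + 1), A ^ j with hS
  have hPS : P₀ * S = ((m : ℂ) + 1) • P₀ := by
    have h1 : ∀ j, P₀ * A ^ j = P₀ := by
      intro j
      induction j with
      | zero => simp
      | succ j ih => rw [pow_succ, ← mul_assoc, ih, hPA]
    rw [hS, Finset.mul_sum]
    simp only [h1, Finset.sum_const, Finset.card_range]
    rw [← Nat.cast_smul_eq_nsmul ℂ]
    push_cast
    rfl
  have hPS' : P₀ * S = S := by
    have h1 : (A - 1) * S = 0 := by rw [hS, mul_geom_sum, hAn, sub_self]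
    ext i j
    have h2 := hP₀ker (fun i => S i j) (by
      ext i
      exact congrFun (congrFun h1 i) j)
    exact congrFun h2 i
  have hSP : S = ((m : ℂ) + 1) • P₀ := by rw [← hPS, hPS']
  have hPtr : P₀.trace = 1 := by
    have h1 : (S * A).trace = (m : ℂ) + 1 := by
      rw [hS, Finset.sum_mul, trace_sum, Finset.sum_congr rfl fun j hj =>
        tr2 j (Finset.mem_range.1 hj)]
      simp
    rw [hSP, Matrix.smul_mul, hPA, trace_smul, smul_eq_mul] at h1
    exact mul_left_cancel₀ hm0 (by rw [h1, mul_one])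
  have fin : ∀ k < m + 1, P₀ * B ^ k * A * B * P₀ = (if k = m then ω else 0) • P₀ := by
    intro k hk
    have h1 : (S * B ^ k * (A * B)).trace = if k = m then (m + 1) * ω else 0 := by
      rw [hS, Finset.sum_mul, Finset.sum_mul, trace_sum, Finset.sum_congr rfl fun j hj =>
        tr1 j (Finset.mem_range.1 hj) k hk]
      simp
    rw [hSP, Matrix.smul_mul, Matrix.smul_mul, trace_smul, smul_eq_mul] at h1
    have h2 := rank_one_aux P₀ hP₀idem hPtr (B ^ k * (A * B))
    have h3 : (P₀ * (B ^ k * (A * B))).trace = if k = m then ω else 0 := by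
      apply mul_left_cancel₀ hm0
      rw [← mul_assoc P₀, h1]
      split_ifs <;> simp
    rw [h3] at h2
    rw [← h2]
    simp only [mul_assoc]
  refine ⟨fun r h1 h2 => ?_, ?_⟩
  · rw [fin r (by omega), if_neg (by omega), zero_smul]
  · rw [Nat.add_sub_cancel, fin m (by omega), if_pos rfl]
end
end

section
/- Let n ≥ 2, ω = exp(2πi/n), let Aₙ ∈ Mₙ(ℂ) be the diagonal matrix with (Aₙ)_{jj} = ω^j for j = 0,…,n−1, and let B̂ₙ be the cyclic shift matrix with (B̂ₙ)_{jk} = 1 if j ≡ k+1 (mod n) and 0 otherwise. Let A, B ∈ Mₙ(ℂ) be such that A is normal, the operator norm of B on Euclidean ℂⁿ equals 1, and {(x,y,z₁,z₂) ∈ ℂ⁴ : det(x·A + y·B + z₁·AB + z₂·BA − I) = 0} = {(x,y,z₁,z₂) ∈ ℂ⁴ : xⁿ + yⁿ + (−1)^{n−1}(ω z₁ + z₂)ⁿ = 1}. Then there exists a unitary U ∈ Mₙ(ℂ) such that U A Uᴴ = Aₙ and U B Uᴴ = B̂ₙ. -/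
open Matrix Complex

noncomputable section

open Polynomial in
lemma charpoly_aux_s15 {n : ℕ} (hn : 0 < n) (M : Matrix (Fin n) (Fin n) ℂ) (c : ℂ) (hc : c ≠ 0)
    (h : ∀ s : ℂ, s ^ n * c = 1 → (s • M - 1).det = 0) : M ^ n = c • (1 : Matrix (Fin n) (Fin n) ℂ) := by
  have hsep : (X ^ n - C c : ℂ[X]).Separable :=
    separable_X_pow_sub_C c (by exact_mod_cast hn.ne') hc
  have hmon : (X ^ n - C c : ℂ[X]).Monic := monic_X_pow_sub_C c hn.ne'
  have hdvd : (X ^ n - C c : ℂ[X]) ∣ M.charpoly := by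
    have hsp : (X ^ n - C c : ℂ[X]).Splits := IsAlgClosed.splits _
    rw [hsp.dvd_iff_roots_le_roots hmon.ne_zero M.charpoly_monic.ne_zero]
    rw [Multiset.le_iff_subset (nodup_roots hsep)]
    intro μ hμ
    rw [mem_roots hmon.ne_zero] at hμ
    rw [mem_roots M.charpoly_monic.ne_zero]
    have h1 : μ ^ n = c := by
      simpa [sub_eq_zero] using hμ
    have h0 : μ ≠ 0 := by
      rintro rfl
      rw [zero_pow hn.ne'] at h1
      exact hc h1.symm
    have h2 := h μ⁻¹ (by rw [← h1, ← mul_pow, inv_mul_cancel₀ h0, one_pow])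
    rw [IsRoot, Matrix.eval_charpoly]
    have h3 : Matrix.scalar (Fin n) μ - M = (-μ) • (μ⁻¹ • M - 1) := by
      rw [smul_sub, smul_smul, neg_mul, mul_inv_cancel₀ h0, neg_smul, neg_smul, one_smul,
        Matrix.scalar_apply, ← Matrix.smul_one_eq_diagonal]
      abel
    rw [h3, Matrix.det_smul, h2, mul_zero]
  have heq : M.charpoly = X ^ n - C c := by
    refine (eq_of_monic_of_dvd_of_natDegree_le hmon M.charpoly_monic hdvd ?_)
    rw [M.charpoly_natDegree_eq_dim, natDegree_X_pow_sub_C, Fintype.card_fin]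
  have := M.aeval_self_charpoly
  rw [heq] at this
  simp only [map_sub, map_pow, aeval_X, aeval_C, sub_eq_zero] at this
  rw [this, Algebra.algebraMap_eq_smul_one]

open scoped Matrix.Norms.L2Operator in
lemma scalar_aux {n : ℕ} (W : Matrix (Fin n) (Fin n) ℂ) (hW : IsStarNormal W) (w : ℂ)
    (h : ∀ μ : ℂ, (W - μ • (1 : Matrix (Fin n) (Fin n) ℂ)).det = 0 → μ = w) :
    W = w • (1 : Matrix (Fin n) (Fin n) ℂ) := by
  have hs : ∀ μ ∈ spectrum ℂ W, μ = w := by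
    intro μ hμ
    apply h
    rw [spectrum.mem_iff, Matrix.isUnit_iff_isUnit_det, isUnit_iff_ne_zero, not_not,
      Algebra.algebraMap_eq_smul_one] at hμ
    rw [← neg_sub, Matrix.det_neg, hμ, mul_zero]
  calc W = cfc (fun x : ℂ => x) W := (cfc_id' ℂ W hW).symm
    _ = cfc (fun _ : ℂ => w) W := cfc_congr (fun x hx => hs x hx)
    _ = _ := by rw [cfc_const w W hW, Algebra.algebraMap_eq_smul_one]

open scoped Matrix.Norms.L2Operator in
lemma unitary_aux {n : ℕ} (hn : 0 < n) (A : Matrix (Fin n) (Fin n) ℂ) (hA : IsStarNormal A)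
    (h : A ^ n = 1) : star A * A = 1 ∧ A * star A = 1 := by
  rw [← Unitary.mem_iff, unitary_iff_isStarNormal_and_spectrum_subset_unitary]
  refine ⟨hA, fun μ hμ => ?_⟩
  have h1 : μ ^ n ∈ spectrum ℂ (A ^ n) := spectrum.pow_mem_pow A n hμ
  rw [h] at h1
  have h2 : μ ^ n = 1 := by
    rw [spectrum.mem_iff] at h1
    by_contra h3
    apply h1
    rw [← map_one (algebraMap ℂ (Matrix (Fin n) (Fin n) ℂ)), ← map_sub]
    exact (isUnit_iff_ne_zero.2 (sub_ne_zero.2 h3)).map _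
  have h3 : ‖μ‖ = 1 := Complex.norm_eq_one_of_pow_eq_one h2 hn.ne'
  rw [SetLike.mem_coe, Unitary.mem_iff_star_mul_self]
  simp [Complex.star_def, Complex.conj_mul', h3]

lemma isom_aux {n : ℕ} (hn : 0 < n) (B : Matrix (Fin n) (Fin n) ℂ)
    (hB : ‖Matrix.toEuclideanCLM (𝕜 := ℂ) B‖ = 1) (h : B ^ n = 1) : star B * B = 1 := by
  set T := Matrix.toEuclideanCLM (𝕜 := ℂ) B with hT
  have hTn : T ^ n = 1 := by rw [hT, ← map_pow, h, map_one]
  have hle : ∀ x, ‖T x‖ ≤ ‖x‖ := fun x => by simpa [hB] using T.le_opNorm x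
  have hk : ∀ k x, ‖(T ^ k) x‖ ≤ ‖x‖ := by
    intro k
    induction k with
    | zero => intro x; simp
    | succ k ih =>
      intro x
      rw [pow_succ]
      exact (ih (T x)).trans (hle x)
  have hiso : ∀ x, ‖T x‖ = ‖x‖ := by
    intro x
    refine le_antisymm (hle x) ?_
    have h1 : (T ^ (n - 1)) (T x) = x := by
      have : T ^ (n - 1) * T = 1 := by rw [← pow_succ, Nat.sub_add_cancel hn, hTn]
      exact congrArg (fun S => S x) this
    calc ‖x‖ = ‖(T ^ (n - 1)) (T x)‖ := by rw [h1]
      _ ≤ _ := hk _ _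
  have h2 := (ContinuousLinearMap.norm_map_iff_adjoint_comp_self T).1 hiso
  have h3 : star T * T = 1 := h2
  rw [hT, ← map_star, ← map_mul] at h3
  exact (Matrix.toEuclideanCLM (𝕜 := ℂ)).injective (h3.trans (map_one _).symm)

theorem stmt_15 (n : ℕ) (hn : 2 ≤ n)
    (ω : ℂ) (hω : ω = Complex.exp (2 * Real.pi * Complex.I / n))
    (Aₙ Bhat : Matrix (Fin n) (Fin n) ℂ)
    (hAₙ : Aₙ = Matrix.diagonal (fun j : Fin n => ω ^ (j : ℕ)))
    (hBhat : Bhat = Matrix.of fun j k : Fin n =>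
      if (j : ℕ) % n = ((k : ℕ) + 1) % n then 1 else 0)
    (A B : Matrix (Fin n) (Fin n) ℂ)
    (hA : A * Aᴴ = Aᴴ * A)
    (hB : ‖Matrix.toEuclideanCLM (𝕜 := ℂ) B‖ = 1)
    (hspec : {p : ℂ × ℂ × ℂ × ℂ |
        (p.1 • A + p.2.1 • B + p.2.2.1 • (A * B) + p.2.2.2 • (B * A) - 1).det = 0} =
      {p : ℂ × ℂ × ℂ × ℂ |
        p.1 ^ n + p.2.1 ^ n + (-1 : ℂ) ^ (n - 1) * (ω * p.2.2.1 + p.2.2.2) ^ n = 1}) :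
    ∃ U : Matrix (Fin n) (Fin n) ℂ, U * Uᴴ = 1 ∧
      U * A * Uᴴ = Aₙ ∧ U * B * Uᴴ = Bhat := by
  have hn0 : 0 < n := by omega
  have hnz : n ≠ 0 := hn0.ne'
  have hprim : IsPrimitiveRoot ω n := hω ▸ Complex.isPrimitiveRoot_exp n hnz
  have hsp : ∀ x y z w : ℂ, (x • A + y • B + z • (A * B) + w • (B * A) - 1).det = 0 ↔
      x ^ n + y ^ n + (-1 : ℂ) ^ (n - 1) * (ω * z + w) ^ n = 1 := fun x y z w =>
    Set.ext_iff.1 hspec (x, y, z, w)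
  have hAn : A ^ n = 1 := by
    have := charpoly_aux_s15 hn0 A 1 one_ne_zero (fun s hs => by
      have := (hsp s 0 0 0).2 (by simpa [hnz] using hs)
      simpa using this)
    simpa using this
  have hBn : B ^ n = 1 := by
    have := charpoly_aux_s15 hn0 B 1 one_ne_zero (fun s hs => by
      have := (hsp 0 s 0 0).2 (by simpa [hnz] using hs)
      simpa using this)
    simpa using this
  obtain ⟨hA1, hA2⟩ := unitary_aux hn0 A ⟨hA.symm⟩ hAn
  have hB1 := isom_aux hn0 B hB hBn
  have hB2 : B * star B = 1 := mul_eq_one_comm.1 hB1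
  have hdet : ∀ μ : ℂ, (A * B - μ • (B * A)).det = 0 → μ = ω := by
    intro μ hμ
    by_contra hne
    have hc : (-1 : ℂ) ^ (n - 1) * (ω - μ) ^ n ≠ 0 :=
      mul_ne_zero (pow_ne_zero _ (by norm_num)) (pow_ne_zero _ (sub_ne_zero.2 (Ne.symm hne)))
    have h1 := charpoly_aux_s15 hn0 (A * B - μ • (B * A)) _ hc (fun s hs => by
      have := (hsp 0 0 s (-(s * μ))).2 (by
        rw [zero_pow hnz, show ω * s + -(s * μ) = s * (ω - μ) by ring, mul_pow]
        linear_combination hs)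
      rw [← this]
      congr 1
      simp [smul_sub, smul_smul, sub_eq_add_neg])
    have h2 := congrArg Matrix.det h1
    rw [Matrix.det_pow, hμ, zero_pow hnz, Matrix.det_smul, Matrix.det_one, mul_one] at h2
    exact pow_ne_zero _ hc h2.symm
  have hAB : A * B = ω • (B * A) := by
    have hW : A * B * (star A * star B) = ω • (1 : Matrix (Fin n) (Fin n) ℂ) := by
      apply scalar_aux
      · have hmA : A ∈ unitary (Matrix (Fin n) (Fin n) ℂ) := ⟨hA1, hA2⟩
        have hmB : B ∈ unitary (Matrix (Fin n) (Fin n) ℂ) := ⟨hB1, hB2⟩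
        have hmW := mul_mem (mul_mem hmA hmB) (mul_mem (Unitary.star_mem hmA) (Unitary.star_mem hmB))
        exact ⟨by rw [Commute, SemiconjBy, hmW.1, hmW.2]⟩
      · intro μ hμ
        apply hdet
        have : A * B - μ • (B * A) = (A * B * (star A * star B) - μ • 1) * (B * A) := by
          rw [sub_mul, smul_mul_assoc, one_mul]
          congr 1
          calc A * B = A * B * (star A * (star B * B) * A) := by
                rw [hB1, mul_one, hA1, mul_one]
            _ = _ := by simp only [mul_assoc]
        rw [this, Matrix.det_mul, hμ, zero_mul]
    calc A * B = A * B * (star A * (star B * B) * A) := by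
          rw [hB1, mul_one, hA1, mul_one]
      _ = A * B * (star A * star B) * (B * A) := by simp only [mul_assoc]
      _ = _ := by rw [hW, smul_mul_assoc, one_mul]
  have hABk : ∀ k : ℕ, A * B ^ k = ω ^ k • (B ^ k * A) := by
    intro k
    induction k with
    | zero => simp
    | succ k ih =>
      rw [pow_succ, ← mul_assoc, ih, smul_mul_assoc, mul_assoc, hAB, mul_smul_comm, smul_smul,
        pow_succ, mul_assoc]
  -- the starting vector
  obtain ⟨v, hv0, hv⟩ : ∃ v : Fin n → ℂ, v ≠ 0 ∧ A *ᵥ v = v := by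
    have h1 : (A - 1).det = 0 := by
      have := (hsp 1 0 0 0).2 (by simp [hnz])
      simpa using this
    obtain ⟨v, hv0, hv⟩ := Matrix.exists_mulVec_eq_zero_iff.2 h1
    refine ⟨v, hv0, ?_⟩
    rwa [Matrix.sub_mulVec, Matrix.one_mulVec, sub_eq_zero] at hv
  obtain ⟨u, hu1, hu⟩ : ∃ u : Fin n → ℂ, star u ⬝ᵥ u = 1 ∧ A *ᵥ u = u := by
    set r : ℝ := ‖WithLp.toLp 2 v‖ with hr
    have hr0 : r ≠ 0 := by
      rw [hr, norm_ne_zero_iff]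
      intro h
      exact hv0 (congrArg WithLp.ofLp h)
    have hrv : star v ⬝ᵥ v = (r : ℂ) ^ 2 := by
      have := inner_self_eq_norm_sq_to_K (𝕜 := ℂ) (WithLp.toLp 2 v)
      rw [EuclideanSpace.inner_toLp_toLp, dotProduct_comm] at this
      exact this
    have hrc : (r : ℂ) ≠ 0 := by exact_mod_cast hr0
    refine ⟨(r : ℂ)⁻¹ • v, ?_, ?_⟩
    · rw [star_smul, smul_dotProduct, dotProduct_smul, hrv]
      simp only [smul_eq_mul, star_inv₀, Complex.star_def, Complex.conj_ofReal]
      field_simp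
    · rw [Matrix.mulVec_smul, hv]
  let V : Matrix (Fin n) (Fin n) ℂ := Matrix.of fun j k => (B ^ (k : ℕ) *ᵥ u) j
  have hVcol : ∀ (M : Matrix (Fin n) (Fin n) ℂ) (j k : Fin n),
      (M * V) j k = ((M * B ^ (k : ℕ)) *ᵥ u) j := by
    intro M j k
    rw [← Matrix.mulVec_mulVec]
    rfl
  have hAV : A * V = V * Aₙ := by
    ext j k
    rw [hVcol, hABk, hAₙ, Matrix.mul_diagonal, Matrix.smul_mulVec, ← Matrix.mulVec_mulVec, hu]
    simp [V, mul_comm]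
  have hBV : B * V = V * Bhat := by
    ext j k
    rw [hVcol, ← pow_succ', Matrix.mul_apply]
    have hlt : ((k : ℕ) + 1) % n < n := Nat.mod_lt _ hn0
    rw [Finset.sum_eq_single (⟨((k : ℕ) + 1) % n, hlt⟩ : Fin n)]
    · have : B ^ (((k : ℕ) + 1) % n) = B ^ ((k : ℕ) + 1) := (pow_eq_pow_mod _ hBn).symm
      simp [V, hBhat, this]
    · intro b _ hb
      have : ¬ ((b : ℕ) % n = ((k : ℕ) + 1) % n) := by
        intro h
        apply hb
        ext
        exact (Nat.mod_eq_of_lt b.2).symm.trans h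
      rw [hBhat, Matrix.of_apply, if_neg this, mul_zero]
    · simp
  have hVV : Vᴴ * V = 1 := by
    have hG : Vᴴ * V = Aₙᴴ * (Vᴴ * V) * Aₙ := by
      calc Vᴴ * V = Vᴴ * (star A * A) * V := by rw [hA1, mul_one]
        _ = (A * V)ᴴ * (A * V) := by
          rw [Matrix.conjTranspose_mul, Matrix.star_eq_conjTranspose]; simp only [mul_assoc]
        _ = _ := by rw [hAV, Matrix.conjTranspose_mul]; simp only [mul_assoc]
    ext i j
    by_cases hij : i = j
    · subst hij
      have hBk : star (B ^ (i : ℕ)) * B ^ (i : ℕ) = 1 :=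
        (Unitary.mem_iff.1 (pow_mem (Unitary.mem_iff.2 ⟨hB1, hB2⟩) (i : ℕ))).1
      rw [Matrix.one_apply_eq]
      have : (Vᴴ * V) i i = star (B ^ (i : ℕ) *ᵥ u) ⬝ᵥ (B ^ (i : ℕ) *ᵥ u) := rfl
      rw [this, Matrix.star_mulVec, ← Matrix.dotProduct_mulVec, Matrix.mulVec_mulVec,
        ← Matrix.star_eq_conjTranspose, hBk, Matrix.one_mulVec, hu1]
    · rw [Matrix.one_apply_ne hij]
      have h1 := congrFun (congrFun hG i) j
      rw [hAₙ, Matrix.mul_diagonal, Matrix.diagonal_conjTranspose, Matrix.diagonal_mul] at h1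
      have hω1 : ‖ω‖ = 1 := Complex.norm_eq_one_of_pow_eq_one hprim.pow_eq_one hnz
      have hci : ω ^ (i : ℕ) * star (ω ^ (i : ℕ)) = 1 := by
        rw [Complex.star_def, Complex.mul_conj', norm_pow, hω1]; simp
      by_contra hne
      apply hij
      have h2 : star (ω ^ (i : ℕ)) * ω ^ (j : ℕ) = 1 := by
        apply mul_right_cancel₀ hne
        rw [one_mul]
        conv_rhs => rw [h1]
        simp only [Pi.star_apply]
        ring
      have h3 : ω ^ (i : ℕ) = ω ^ (j : ℕ) := by
        calc ω ^ (i : ℕ) = ω ^ (i : ℕ) * (star (ω ^ (i : ℕ)) * ω ^ (j : ℕ)) := by rw [h2, mul_one]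
          _ = _ := by rw [← mul_assoc, hci, one_mul]
      exact Fin.ext (hprim.pow_inj i.2 j.2 h3)
  refine ⟨Vᴴ, ?_, ?_, ?_⟩
  · rw [Matrix.conjTranspose_conjTranspose, hVV]
  · rw [Matrix.conjTranspose_conjTranspose, mul_assoc, hAV, ← mul_assoc, hVV, one_mul]
  · rw [Matrix.conjTranspose_conjTranspose, mul_assoc, hBV, ← mul_assoc, hVV, one_mul]
end
end
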